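/- arXiv:2410.21957 — 2 statements merged into one kernel-verified Lean document; each statement's English description precedes it below -/
import Mathlib

section
/- Let n ≥ 1. Assume a transform 𝒯 : GX → GX satisfies: (1) 𝒯(𝒯(Φ)) = Φ for every Φ ∈ GX; (2) for every Φ ∈ GX, 𝒯(Φ) = Φ if Φ ∈ GY and 𝒯(Φ) ≠ Φ if Φ ∉ GY; and (3) there exists a real-analytic map F : ℝ^{2n+1} → ℝ^{2n+1} such that 𝒯(Φ) = F ∘ Φ for every Φ ∈ GX. Then 𝒯 is the Legendre involution, i.e. 𝒯(θ, a, b) = (b, Σᵢ₌₁ⁿ bᵢθᵢ − a, θ) for every (θ, a, b) ∈ GX. -/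
open scoped BigOperators

/-- Triples `(θ, a, b)` encoding maps `ℝⁿ → ℝ^{2n+1}`. -/
abbrev TripleMap (n : ℕ) :=
  ((Fin n → ℝ) → Fin n → ℝ) × ((Fin n → ℝ) → ℝ) × ((Fin n → ℝ) → Fin n → ℝ)

/-- All three components are `C^∞`. -/
def SmoothTriple (n : ℕ) (Φ : TripleMap n) : Prop :=
  ContDiff ℝ (⊤ : ℕ∞) Φ.1 ∧ ContDiff ℝ (⊤ : ℕ∞) Φ.2.1 ∧ ContDiff ℝ (⊤ : ℕ∞) Φ.2.2

/-- The creative condition (*): `da = ∑ᵢ bᵢ dθᵢ`. -/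
def Creative (n : ℕ) (Φ : TripleMap n) : Prop :=
  ∀ x v : Fin n → ℝ,
    fderiv ℝ Φ.2.1 x v = ∑ i, Φ.2.2 x i * fderiv ℝ (fun y => Φ.1 y i) x v

/-- `RegPts f` is the set of regular points of `f : ℝⁿ → ℝⁿ`, i.e. points where
the differential is invertible. -/
def RegPts (n : ℕ) (f : (Fin n → ℝ) → Fin n → ℝ) : Set (Fin n → ℝ) :=
  {x | Function.Bijective (fderiv ℝ f x)}

/-- `X`: smooth triples satisfying the creative condition. -/
def Xset (n : ℕ) : Set (TripleMap n) := {Φ | SmoothTriple n Φ ∧ Creative n Φ}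

/-- `GX`: elements of `X` such that `Reg θ` and `Reg b` are dense. -/
def GXset (n : ℕ) : Set (TripleMap n) :=
  {Φ | SmoothTriple n Φ ∧ Creative n Φ ∧ Dense (RegPts n Φ.1) ∧ Dense (RegPts n Φ.2.2)}

/-- `Y`: triples of the form `(θ, ½∑θᵢ², θ)` with `θ` smooth. -/
def Yset (n : ℕ) : Set (TripleMap n) :=
  {Φ | ∃ θ : (Fin n → ℝ) → Fin n → ℝ, ContDiff ℝ (⊤ : ℕ∞) θ ∧
    Φ = (θ, fun x => (1 / 2) * ∑ i, θ x i ^ 2, θ)}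

/-- `GY`: triples of the form `(θ, ½∑θᵢ², θ)` with `θ` smooth and `Reg θ` dense. -/
def GYset (n : ℕ) : Set (TripleMap n) :=
  {Φ | ∃ θ : (Fin n → ℝ) → Fin n → ℝ, ContDiff ℝ (⊤ : ℕ∞) θ ∧ Dense (RegPts n θ) ∧
    Φ = (θ, fun x => (1 / 2) * ∑ i, θ x i ^ 2, θ)}

/-- The Legendre involution `L(θ, a, b) = (b, ∑ᵢ bᵢθᵢ − a, θ)`. -/
def Legendre (n : ℕ) (Φ : TripleMap n) : TripleMap n :=
  (Φ.2.2, fun x => (∑ i, Φ.2.2 x i * Φ.1 x i) - Φ.2.1 x, Φ.1)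

/-- Packing a triple `(θ, a, b)` into a single map `ℝⁿ → ℝ^{2n+1}`
(realized as `ℝⁿ × ℝ × ℝⁿ`). -/
def packTriple (n : ℕ) (Φ : TripleMap n) : (Fin n → ℝ) → (Fin n → ℝ) × ℝ × (Fin n → ℝ) :=
  fun x => (Φ.1 x, Φ.2.1 x, Φ.2.2 x)

open Matrix

/-- The ambient space `ℝ^{2n+1}` of one-jets `(θ, a, b)`. -/
abbrev JetSpace (n : ℕ) := (Fin n → ℝ) × ℝ × (Fin n → ℝ)

/-- The vector of the contact hyperplane `da = ∑ bᵢ dθᵢ` at `p` with `θ`-part `v` and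
`b`-part `w`. -/
def contactLift {n : ℕ} (p : JetSpace n) (v w : Fin n → ℝ) : JetSpace n :=
  (v, p.2.2 ⬝ᵥ v, w)

/-- The triple of component functions of a map into the jet space. -/
def unpackTriple {n : ℕ} (g : (Fin n → ℝ) → JetSpace n) : TripleMap n :=
  (fun x => (g x).1, fun x => (g x).2.1, fun x => (g x).2.2)

theorem packTriple_unpackTriple {n : ℕ} (g : (Fin n → ℝ) → JetSpace n) :
    packTriple n (unpackTriple g) = g := rfl

theorem unpackTriple_packTriple {n : ℕ} (Φ : TripleMap n) :
    unpackTriple (packTriple n Φ) = Φ := rfl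

theorem smoothTriple_unpackTriple {n : ℕ} {g : (Fin n → ℝ) → JetSpace n}
    (hg : ContDiff ℝ (⊤ : ℕ∞) g) : SmoothTriple n (unpackTriple g) :=
  ⟨contDiff_fst.comp hg, contDiff_fst.comp (contDiff_snd.comp hg),
    contDiff_snd.comp (contDiff_snd.comp hg)⟩

theorem creative_unpackTriple_iff {n : ℕ} {g : (Fin n → ℝ) → JetSpace n}
    (hg : Differentiable ℝ g) :
    Creative n (unpackTriple g) ↔
      ∀ x v, (fderiv ℝ g x v).2.1 = (g x).2.2 ⬝ᵥ (fderiv ℝ g x v).1 := by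
  have ha : ∀ x v, fderiv ℝ (fun x => (g x).2.1) x v = (fderiv ℝ g x v).2.1 := fun x v => by
    rw [((hg x).hasFDerivAt.snd.fst).fderiv]; rfl
  have hθ : ∀ x v i, fderiv ℝ (fun x => (g x).1 i) x v = (fderiv ℝ g x v).1 i := fun x v i => by
    rw [(hasFDerivAt_pi'.1 ((hg x).hasFDerivAt.fst) i).fderiv]; rfl
  simp only [Creative, unpackTriple, ha, hθ, dotProduct]

/-- The polynomial Legendrian map through `p` with tangent plane spanned by `(P v, Q v)`. -/
noncomputable def quadraticLegendrian {n : ℕ} (p : JetSpace n) (P Q : Matrix (Fin n) (Fin n) ℝ)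
    (x : Fin n → ℝ) : JetSpace n :=
  (p.1 + P *ᵥ x, p.2.1 + p.2.2 ⬝ᵥ (P *ᵥ x) + 1 / 2 * ((Q *ᵥ x) ⬝ᵥ (P *ᵥ x)), p.2.2 + Q *ᵥ x)

theorem AnalyticAt.continuousLinearMap_apply {E G H : Type*} [NormedAddCommGroup E]
    [NormedSpace ℝ E] [NormedAddCommGroup G] [NormedSpace ℝ G] [NormedAddCommGroup H]
    [NormedSpace ℝ H] {L : E → G →L[ℝ] H} {g : E → G} {x : E}
    (hL : AnalyticAt ℝ L x) (hg : AnalyticAt ℝ g x) : AnalyticAt ℝ (fun y => L y (g y)) x :=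
  AnalyticAt.comp (g := fun q : (G →L[ℝ] H) × G => q.1 q.2) (f := fun y => (L y, g y))
    ((ContinuousLinearMap.id ℝ (G →L[ℝ] H)).analyticAt_bilinear (L x, g x)) (hL.prod hg)

theorem analyticOnNhd_mulVec {n : ℕ} (P : Matrix (Fin n) (Fin n) ℝ) :
    AnalyticOnNhd ℝ (fun x => P *ᵥ x) Set.univ :=
  (LinearMap.toContinuousLinearMap P.mulVecLin).analyticOnNhd _

theorem AnalyticOnNhd.dotProduct_univ {n : ℕ} {E : Type*} [NormedAddCommGroup E] [NormedSpace ℝ E]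
    {f g : E → Fin n → ℝ} (hf : AnalyticOnNhd ℝ f Set.univ) (hg : AnalyticOnNhd ℝ g Set.univ) :
    AnalyticOnNhd ℝ (fun x => f x ⬝ᵥ g x) Set.univ := by
  simp only [dotProduct]
  refine Finset.analyticOnNhd_fun_sum _ fun i _ => ?_
  exact (fun x hx => (analyticAt_pi_iff.1 (hf x hx) i).mul (analyticAt_pi_iff.1 (hg x hx) i))

theorem analyticOnNhd_quadraticLegendrian {n : ℕ} (p : JetSpace n)
    (P Q : Matrix (Fin n) (Fin n) ℝ) : AnalyticOnNhd ℝ (quadraticLegendrian p P Q) Set.univ := by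
  have hP := analyticOnNhd_mulVec P
  have hQ := analyticOnNhd_mulVec Q
  exact (analyticOnNhd_const.add hP).prod (((analyticOnNhd_const.add
    (analyticOnNhd_const.dotProduct_univ hP)).add (analyticOnNhd_const.mul (hQ.dotProduct_univ hP))).prod
      (analyticOnNhd_const.add hQ))

theorem quadraticLegendrian_zero {n : ℕ} (p : JetSpace n) (P Q : Matrix (Fin n) (Fin n) ℝ) :
    quadraticLegendrian p P Q 0 = p := by
  simp [quadraticLegendrian]

theorem fderiv_quadraticLegendrian {n : ℕ} (p : JetSpace n) {P Q : Matrix (Fin n) (Fin n) ℝ}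
    (hPQ : (Pᵀ * Q).IsSymm) (x v : Fin n → ℝ) :
    fderiv ℝ (quadraticLegendrian p P Q) x v =
      contactLift (quadraticLegendrian p P Q x) (P *ᵥ v) (Q *ᵥ v) := by
  have hd : DifferentiableAt ℝ (quadraticLegendrian p P Q) x :=
    (analyticOnNhd_quadraticLegendrian p P Q x trivial).differentiableAt
  rw [← hd.lineDeriv_eq_fderiv]
  have hsymm : (Q *ᵥ v) ⬝ᵥ (P *ᵥ x) = (Q *ᵥ x) ⬝ᵥ (P *ᵥ v) := by
    have h : Qᵀ * P = Pᵀ * Q := by simpa [Matrix.IsSymm] using hPQ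
    rw [dotProduct_comm (Q *ᵥ x), dotProduct_mulVec, dotProduct_mulVec, ← mulVec_transpose,
      ← mulVec_transpose, mulVec_mulVec, mulVec_mulVec, dotProduct_comm, dotProduct_comm _ x,
      ← h]
  have key : ∀ t : ℝ, quadraticLegendrian p P Q (x + t • v) = quadraticLegendrian p P Q x +
      t • contactLift (quadraticLegendrian p P Q x) (P *ᵥ v) (Q *ᵥ v) +
      t ^ 2 • ((0, 1 / 2 * ((Q *ᵥ v) ⬝ᵥ (P *ᵥ v)), 0) : JetSpace n) := by
    intro t
    simp only [quadraticLegendrian, contactLift, mulVec_add, mulVec_smul, Prod.smul_mk,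
      Prod.mk_add_mk, smul_zero, add_zero, add_dotProduct, dotProduct_add, smul_dotProduct,
      dotProduct_smul, smul_eq_mul, hsymm]
    refine Prod.ext (by simp [add_assoc]) (Prod.ext ?_ (by simp [add_assoc]))
    simp only
    ring
  rw [lineDeriv]
  simp only [key]
  have h1 : HasDerivAt (fun t : ℝ => quadraticLegendrian p P Q x +
      t • contactLift (quadraticLegendrian p P Q x) (P *ᵥ v) (Q *ᵥ v) +
      t ^ 2 • ((0, 1 / 2 * ((Q *ᵥ v) ⬝ᵥ (P *ᵥ v)), 0) : JetSpace n)) _ 0 :=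
    (((hasDerivAt_id (0 : ℝ)).smul_const _).const_add _).add
      (((hasDerivAt_id (0 : ℝ)).pow 2).smul_const _)
  rw [h1.deriv]
  simp

theorem AnalyticOnNhd.matrix_det {n : ℕ} {E : Type*} [NormedAddCommGroup E] [NormedSpace ℝ E]
    {N : E → Matrix (Fin n) (Fin n) ℝ}
    (hN : ∀ i j, AnalyticOnNhd ℝ (fun x => N x i j) Set.univ) :
    AnalyticOnNhd ℝ (fun x => (N x).det) Set.univ := by
  simp only [det_apply]
  exact Finset.analyticOnNhd_fun_sum _ fun σ _ =>
    AnalyticOnNhd.const_smul (Finset.analyticOnNhd_fun_prod _ fun i _ => hN _ _)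

theorem dense_regPts_of_analytic {n : ℕ} {f : (Fin n → ℝ) → Fin n → ℝ}
    (hf : AnalyticOnNhd ℝ f Set.univ) {x₀ : Fin n → ℝ} (hx₀ : x₀ ∈ RegPts n f) :
    Dense (RegPts n f) := by
  have hdet : ∀ x, x ∈ RegPts n f ↔
      (LinearMap.toMatrix' (fderiv ℝ f x : (Fin n → ℝ) →ₗ[ℝ] Fin n → ℝ)).det ≠ 0 := by
    intro x
    rw [LinearMap.det_toMatrix', ← isUnit_iff_ne_zero, ← LinearMap.isUnit_iff_isUnit_det,
      Module.End.isUnit_iff]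
    rfl
  have han : AnalyticOnNhd ℝ (fun x =>
      (LinearMap.toMatrix' (fderiv ℝ f x : (Fin n → ℝ) →ₗ[ℝ] Fin n → ℝ)).det) Set.univ := by
    refine .matrix_det fun i j x hx => ?_
    simp only [LinearMap.toMatrix'_apply, ContinuousLinearMap.coe_coe]
    exact analyticAt_pi_iff.1 (AnalyticAt.continuousLinearMap_apply (hf.fderiv x hx) analyticAt_const) _
  by_contra hnd
  obtain ⟨y, hy⟩ := not_forall.1 hnd
  have hzero := han.eq_of_eventuallyEq (analyticOnNhd_const (v := (0 : ℝ))) (z₀ := y) (by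
    filter_upwards [isClosed_closure.isOpen_compl.mem_nhds hy] with z hz
    by_contra hne
    exact hz (subset_closure ((hdet z).2 hne)))
  exact (hdet x₀).1 hx₀ (congrFun hzero x₀)

section Jacobian

variable {n : ℕ}

theorem contactLift_add (p : JetSpace n) (v w v' w' : Fin n → ℝ) :
    contactLift p (v + v') (w + w') = contactLift p v w + contactLift p v' w' := by
  simp [contactLift, dotProduct_add]

theorem contactLift_smul (p : JetSpace n) (c : ℝ) (v w : Fin n → ℝ) :
    contactLift p (c • v) (c • w) = c • contactLift p v w := by
  simp [contactLift, dotProduct_smul]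

/-- The contact lift as a linear map. -/
def contactLiftLinear (p : JetSpace n) : (Fin n → ℝ) × (Fin n → ℝ) →ₗ[ℝ] JetSpace n where
  toFun u := contactLift p u.1 u.2
  map_add' _ _ := contactLift_add p _ _ _ _
  map_smul' _ _ := contactLift_smul p _ _ _

/-- The `θ`-part of the differential of `F` along the `θ`-directions of the contact plane. -/
noncomputable def jacθθ (F : JetSpace n → JetSpace n) (p : JetSpace n) :
    Matrix (Fin n) (Fin n) ℝ :=
  of fun i j => (fderiv ℝ F p (contactLift p (Pi.single j 1) 0)).1 i

/-- The `θ`-part of the differential of `F` along the `b`-directions of the contact plane. -/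
noncomputable def jacθb (F : JetSpace n → JetSpace n) (p : JetSpace n) :
    Matrix (Fin n) (Fin n) ℝ :=
  of fun i j => (fderiv ℝ F p (contactLift p 0 (Pi.single j 1))).1 i

/-- The `b`-part of the differential of `F` along the `θ`-directions of the contact plane. -/
noncomputable def jacbθ (F : JetSpace n → JetSpace n) (p : JetSpace n) :
    Matrix (Fin n) (Fin n) ℝ :=
  of fun i j => (fderiv ℝ F p (contactLift p (Pi.single j 1) 0)).2.2 i

/-- The `b`-part of the differential of `F` along the `b`-directions of the contact plane. -/
noncomputable def jacbb (F : JetSpace n → JetSpace n) (p : JetSpace n) :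
    Matrix (Fin n) (Fin n) ℝ :=
  of fun i j => (fderiv ℝ F p (contactLift p 0 (Pi.single j 1))).2.2 i

theorem contactLift_eq_add (p : JetSpace n) (v w : Fin n → ℝ) :
    contactLift p v w = contactLift p v 0 + contactLift p 0 w := by
  rw [← contactLift_add, add_zero, zero_add]

theorem of_single_mulVec (L : (Fin n → ℝ) →ₗ[ℝ] Fin n → ℝ) (v : Fin n → ℝ) :
    (of fun i j => L (Pi.single j 1) i) *ᵥ v = L v := by
  have : (of fun i j => L (Pi.single j 1) i) = LinearMap.toMatrix' L := by
    ext i j; simp [LinearMap.toMatrix'_apply]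
  rw [this, LinearMap.toMatrix'_mulVec]

theorem fderiv_contactLift_fst (F : JetSpace n → JetSpace n) (p : JetSpace n)
    (v w : Fin n → ℝ) :
    (fderiv ℝ F p (contactLift p v w)).1 = jacθθ F p *ᵥ v + jacθb F p *ᵥ w := by
  let L := LinearMap.fst ℝ _ _ ∘ₗ (fderiv ℝ F p : JetSpace n →ₗ[ℝ] JetSpace n) ∘ₗ
    contactLiftLinear p
  rw [contactLift_eq_add, map_add, Prod.fst_add]
  exact congrArg₂ (· + ·) (of_single_mulVec (L ∘ₗ LinearMap.inl ℝ _ _) v).symm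
    (of_single_mulVec (L ∘ₗ LinearMap.inr ℝ _ _) w).symm

theorem fderiv_contactLift_snd (F : JetSpace n → JetSpace n) (p : JetSpace n)
    (v w : Fin n → ℝ) :
    (fderiv ℝ F p (contactLift p v w)).2.2 = jacbθ F p *ᵥ v + jacbb F p *ᵥ w := by
  let L := (LinearMap.snd ℝ _ _ ∘ₗ LinearMap.snd ℝ _ _) ∘ₗ
    (fderiv ℝ F p : JetSpace n →ₗ[ℝ] JetSpace n) ∘ₗ contactLiftLinear p
  rw [contactLift_eq_add, map_add, Prod.snd_add, Prod.snd_add]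
  exact congrArg₂ (· + ·) (of_single_mulVec (L ∘ₗ LinearMap.inl ℝ _ _) v).symm
    (of_single_mulVec (L ∘ₗ LinearMap.inr ℝ _ _) w).symm

theorem analyticOnNhd_contactLift (v w : Fin n → ℝ) :
    AnalyticOnNhd ℝ (fun p : JetSpace n => contactLift p v w) Set.univ :=
  analyticOnNhd_const.prod (((analyticOnNhd_snd.comp analyticOnNhd_snd
    (Set.mapsTo_univ _ _)).dotProduct_univ analyticOnNhd_const).prod analyticOnNhd_const)

theorem analyticOnNhd_fderiv_contactLift {F : JetSpace n → JetSpace n}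
    (hF : AnalyticOnNhd ℝ F Set.univ) (v w : Fin n → ℝ) :
    AnalyticOnNhd ℝ (fun p => fderiv ℝ F p (contactLift p v w)) Set.univ := fun p hp =>
  AnalyticAt.continuousLinearMap_apply (hF.fderiv p hp) (analyticOnNhd_contactLift v w p hp)

theorem analyticOnNhd_jacobian {F : JetSpace n → JetSpace n}
    (hF : AnalyticOnNhd ℝ F Set.univ) (i j : Fin n) :
    AnalyticOnNhd ℝ (fun p => jacθθ F p i j) Set.univ ∧
    AnalyticOnNhd ℝ (fun p => jacθb F p i j) Set.univ ∧
    AnalyticOnNhd ℝ (fun p => jacbθ F p i j) Set.univ ∧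
    AnalyticOnNhd ℝ (fun p => jacbb F p i j) Set.univ := by
  have h1 : ∀ {f : JetSpace n → JetSpace n}, AnalyticOnNhd ℝ f Set.univ →
      AnalyticOnNhd ℝ (fun p => (f p).1 i) Set.univ := fun hf p hp =>
    analyticAt_pi_iff.1 (analyticAt_fst.comp (hf p hp)) i
  have h2 : ∀ {f : JetSpace n → JetSpace n}, AnalyticOnNhd ℝ f Set.univ →
      AnalyticOnNhd ℝ (fun p => (f p).2.2 i) Set.univ := fun hf p hp =>
    analyticAt_pi_iff.1 (analyticAt_snd.comp (analyticAt_snd.comp (hf p hp))) i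
  exact ⟨h1 (analyticOnNhd_fderiv_contactLift hF _ _), h1 (analyticOnNhd_fderiv_contactLift hF _ _),
    h2 (analyticOnNhd_fderiv_contactLift hF _ _), h2 (analyticOnNhd_fderiv_contactLift hF _ _)⟩

theorem analyticOnNhd_add_mul_apply {E : Type*} [NormedAddCommGroup E] [NormedSpace ℝ E]
    {M N : E → Matrix (Fin n) (Fin n) ℝ}
    (hM : ∀ i j, AnalyticOnNhd ℝ (fun x => M x i j) Set.univ)
    (hN : ∀ i j, AnalyticOnNhd ℝ (fun x => N x i j) Set.univ)
    (R : Matrix (Fin n) (Fin n) ℝ) (i j : Fin n) :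
    AnalyticOnNhd ℝ (fun x => (M x * R + N x) i j) Set.univ := by
  simp only [Matrix.add_apply, Matrix.mul_apply]
  exact (Finset.analyticOnNhd_fun_sum _ fun k _ => (hM _ _).mul analyticOnNhd_const).add (hN _ _)

/-- `F` maps the contact hyperplanes to contact hyperplanes. -/
def PreservesContact (F : JetSpace n → JetSpace n) : Prop :=
  ∀ p v w, (fderiv ℝ F p (contactLift p v w)).2.1 =
    (F p).2.2 ⬝ᵥ (fderiv ℝ F p (contactLift p v w)).1

theorem PreservesContact.fderiv_contactLift {F : JetSpace n → JetSpace n}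
    (hc : PreservesContact F) (p : JetSpace n) (v w : Fin n → ℝ) :
    fderiv ℝ F p (contactLift p v w) = contactLift (F p)
      (jacθθ F p *ᵥ v + jacθb F p *ᵥ w) (jacbθ F p *ᵥ v + jacbb F p *ᵥ w) := by
  rw [← fderiv_contactLift_fst, ← fderiv_contactLift_snd]
  exact Prod.ext rfl (Prod.ext (hc p v w) rfl)

/-- The conformal factor of `F` with respect to the contact form `da - ∑ bᵢ dθᵢ`. -/
noncomputable def conformalFactor (F : JetSpace n → JetSpace n) (p : JetSpace n) : ℝ :=
  (fderiv ℝ F p (0, 1, 0)).2.1 - (F p).2.2 ⬝ᵥ (fderiv ℝ F p (0, 1, 0)).1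

theorem fderiv_dotProduct_apply {E : Type*} [NormedAddCommGroup E] [NormedSpace ℝ E]
    {f g : E → Fin n → ℝ} {p : E} (hf : DifferentiableAt ℝ f p) (hg : DifferentiableAt ℝ g p)
    (x : E) : fderiv ℝ (fun q => f q ⬝ᵥ g q) p x =
      fderiv ℝ f p x ⬝ᵥ g p + f p ⬝ᵥ fderiv ℝ g p x := by
  have hi : ∀ i, HasFDerivAt (fun q => f q i * g q i) _ p := fun i =>
    (hasFDerivAt_pi'.1 hf.hasFDerivAt i).mul (hasFDerivAt_pi'.1 hg.hasFDerivAt i)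
  simp only [dotProduct]
  rw [(HasFDerivAt.fun_sum fun i _ => hi i).fderiv, ← Finset.sum_add_distrib]
  simp [mul_comm, add_comm]

theorem PreservesContact.conformally_symplectic {F : JetSpace n → JetSpace n}
    (hF : AnalyticOnNhd ℝ F Set.univ) (hc : PreservesContact F) (p : JetSpace n)
    (v w v' w' : Fin n → ℝ) :
    (fderiv ℝ F p (contactLift p v' w')).2.2 ⬝ᵥ (fderiv ℝ F p (contactLift p v w)).1 -
      (fderiv ℝ F p (contactLift p v w)).2.2 ⬝ᵥ (fderiv ℝ F p (contactLift p v' w')).1 =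
      conformalFactor F p * (w' ⬝ᵥ v - w ⬝ᵥ v') := by
  have hsymm : ∀ x y, fderiv ℝ (fderiv ℝ F) p x y = fderiv ℝ (fderiv ℝ F) p y x := fun x y =>
    ((hF p trivial).contDiffAt (n := 2)).isSymmSndFDerivAt (by simp) x y
  have hFd : HasFDerivAt F (fderiv ℝ F p) p := (hF p trivial).differentiableAt.hasFDerivAt
  have hF2 : HasFDerivAt (fderiv ℝ F) (fderiv ℝ (fderiv ℝ F) p) p :=
    (hF.fderiv p trivial).differentiableAt.hasFDerivAt
  have hlift : ∀ v w x y, HasFDerivAt (fun q : JetSpace n => contactLift q v w)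
      (fderiv ℝ (fun q : JetSpace n => contactLift q v w) p) p ∧
      fderiv ℝ (fun q : JetSpace n => contactLift q v w) p (contactLift p x y) =
        (y ⬝ᵥ v) • ((0, 1, 0) : JetSpace n) := by
    intro v w x y
    have hd : DifferentiableAt ℝ (fun q : JetSpace n => contactLift q v w) p :=
      (analyticOnNhd_contactLift v w p trivial).differentiableAt
    refine ⟨hd.hasFDerivAt, ?_⟩
    rw [← hd.lineDeriv_eq_fderiv, lineDeriv]
    have : ∀ t : ℝ, contactLift (p + t • contactLift p x y) v w =
        contactLift p v w + t • ((y ⬝ᵥ v) • ((0, 1, 0) : JetSpace n)) := by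
      intro t
      simp [contactLift, add_dotProduct, smul_dotProduct]
    simp only [this]
    have h := (((hasDerivAt_id (0 : ℝ)).smul_const
      ((y ⬝ᵥ v) • ((0, 1, 0) : JetSpace n))).const_add (contactLift p v w)).deriv
    simpa using h
  have key : ∀ v w x y, (fderiv ℝ (fderiv ℝ F) p (contactLift p x y) (contactLift p v w)).2.1 +
      (y ⬝ᵥ v) * (fderiv ℝ F p (0, 1, 0)).2.1 =
      (fderiv ℝ F p (contactLift p x y)).2.2 ⬝ᵥ (fderiv ℝ F p (contactLift p v w)).1 +
      (F p).2.2 ⬝ᵥ ((fderiv ℝ (fderiv ℝ F) p (contactLift p x y) (contactLift p v w)).1 +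
        (y ⬝ᵥ v) • (fderiv ℝ F p (0, 1, 0)).1) := by
    intro v w x y
    obtain ⟨h1, h2⟩ := hlift v w x y
    have h3 := hF2.clm_apply h1
    have h4 : ∀ z, fderiv ℝ (fun q => fderiv ℝ F q (contactLift q v w)) p z =
        fderiv ℝ (fderiv ℝ F) p z (contactLift p v w) +
          fderiv ℝ F p (fderiv ℝ (fun q : JetSpace n => contactLift q v w) p z) := fun z => by
      rw [h3.fderiv]; simp [add_comm]
    have h5 := congrArg (fun f => fderiv ℝ f p (contactLift p x y))
      (funext fun q => hc q v w)
    rw [fderiv_dotProduct_apply hFd.snd.snd.differentiableAt h3.fst.differentiableAt,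
      h3.snd.fst.fderiv, hFd.snd.snd.fderiv, h3.fst.fderiv] at h5
    rw [h3.fderiv] at h4
    have h6 := h4 (contactLift p x y)
    rw [h2, map_smul] at h6
    simp only [ContinuousLinearMap.comp_apply, ContinuousLinearMap.coe_fst',
      ContinuousLinearMap.coe_snd', h6] at h5
    simpa using h5
  have k1 := key v w v' w'
  have k2 := key v' w' v w
  rw [hsymm] at k1
  simp only [conformalFactor, dotProduct_add, dotProduct_smul, smul_eq_mul] at k1 k2 ⊢
  linear_combination k2 - k1

end Jacobian

section LinearAlgebra

variable {n : ℕ}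

theorem Matrix.ext_of_dotProduct_mulVec {M N : Matrix (Fin n) (Fin n) ℝ}
    (h : ∀ v w, v ⬝ᵥ (M *ᵥ w) = v ⬝ᵥ (N *ᵥ w)) : M = N := by
  ext i j
  simpa using h (Pi.single i 1) (Pi.single j 1)

theorem mulVec_dotProduct_mulVec (A B : Matrix (Fin n) (Fin n) ℝ) (v w : Fin n → ℝ) :
    (A *ᵥ v) ⬝ᵥ (B *ᵥ w) = v ⬝ᵥ ((Aᵀ * B) *ᵥ w) := by
  rw [← mulVec_mulVec, dotProduct_mulVec v, vecMul_transpose]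

/-- Simultaneous orthogonal diagonalization of the functions of a real symmetric matrix. -/
theorem Matrix.IsSymm.exists_functional_calculus {X : Matrix (Fin n) (Fin n) ℝ} (hX : X.IsSymm) :
    ∃ (C : (Fin n → ℝ) →ₐ[ℝ] Matrix (Fin n) (Fin n) ℝ) (d : Fin n → ℝ), C d = X ∧
      (∀ e, (C e).IsSymm) ∧ ∀ e, (C e).det = ∏ i, e i := by
  have hH : X.IsHermitian := by simpa [Matrix.IsHermitian, Matrix.IsSymm] using hX
  let U : Matrix (Fin n) (Fin n) ℝ := hH.eigenvectorUnitary
  have hU : Uᵀ * U = 1 := by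
    have := Unitary.coe_star_mul_self hH.eigenvectorUnitary
    simpa [U, Matrix.star_eq_conjTranspose] using this
  have hUr : U * Uᵀ = 1 := mul_eq_one_comm.1 hU
  refine ⟨AlgHom.ofLinearMap
    ⟨⟨fun e => U * diagonal e * Uᵀ, fun e f => ?_⟩, fun c e => ?_⟩ ?_ ?_, hH.eigenvalues, ?_, ?_, ?_⟩
  · simp only [Pi.add_def, ← diagonal_add, mul_add, add_mul]
  · simp [diagonal_smul]
  · simp [hUr]
  · intro e f
    change U * diagonal (e * f) * Uᵀ = U * diagonal e * Uᵀ * (U * diagonal f * Uᵀ)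
    calc U * diagonal (e * f) * Uᵀ = U * (diagonal e * diagonal f) * Uᵀ := by
          rw [diagonal_mul_diagonal]; rfl
      _ = U * diagonal e * (Uᵀ * U) * diagonal f * Uᵀ := by
          rw [hU]; simp only [Matrix.mul_assoc, Matrix.one_mul]
      _ = _ := by simp only [Matrix.mul_assoc]
  · have := hH.spectral_theorem
    simpa [U, Matrix.star_eq_conjTranspose, Unitary.conjStarAlgAut_apply] using this.symm
  · intro e
    change (U * diagonal e * Uᵀ)ᵀ = U * diagonal e * Uᵀ
    simp [Matrix.mul_assoc]
  · intro e
    change (U * diagonal e * Uᵀ).det = _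
    rw [det_mul, det_mul, mul_comm U.det, mul_assoc, ← det_mul, hUr]
    simp

/-- A symmetric matrix all of whose translates by singular symmetric matrices are singular
vanishes. -/
theorem Matrix.IsSymm.eq_zero_of_det_add_eq_zero {K : Matrix (Fin n) (Fin n) ℝ} (hK : K.IsSymm)
    (h : ∀ R : Matrix (Fin n) (Fin n) ℝ, R.IsSymm → R.det = 0 → (R + K).det = 0) : K = 0 := by
  obtain ⟨C, d, hC, hsymm, hdet⟩ := hK.exists_functional_calculus
  suffices d = 0 by rw [← hC, this, map_zero]
  funext i
  have hR := h (C (Function.update (1 - d) i 0)) (hsymm _) (by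
    rw [hdet]; exact Finset.prod_eq_zero (Finset.mem_univ i) (by simp))
  rw [← hC, ← map_add, hdet, Finset.prod_eq_zero_iff] at hR
  obtain ⟨j, -, hj⟩ := hR
  rcases eq_or_ne j i with rfl | hji
  · simpa using hj
  · simp [hji] at hj

/-- The differential of a contact involution at a fixed point on the paraboloid is determined by
the condition that it maps Lagrangian planes with a singular projection to such planes. -/
theorem Matrix.IsSymm.eq_one_of_det_mul_det_eq_zero {X : Matrix (Fin n) (Fin n) ℝ}
    (hX : X.IsSymm)
    (h : ∀ P Q : Matrix (Fin n) (Fin n) ℝ, (Pᵀ * Q).IsSymm → (P.det = 0 ∨ Q.det = 0) →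
      ((1 - X) * P + X * Q).det * ((2 - X) * P + (X - 1) * Q).det = 0) : X = 1 := by
  obtain ⟨C, d, hC, hsymm, hdet⟩ := hX.exists_functional_calculus
  suffices d = 1 by rw [← hC, this, map_one]
  funext i
  have hval : ∀ s t : ℝ, s * t = 0 →
      ((1 - d i) * s + d i * t) * ((2 - d i) * s + (d i - 1) * t) = 0 := by
    intro s t hst
    have hs := h (C (Function.update 1 i s)) (C (Function.update 1 i t))
      (by rw [(hsymm _).eq, ← map_mul]; exact hsymm _)
      (by
        rw [hdet, hdet]
        refine (mul_eq_zero.1 hst).imp (fun h0 => ?_) fun h0 => ?_ <;>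
          exact Finset.prod_eq_zero (Finset.mem_univ i) (by simp [h0]))
    have h2 : (2 : Matrix (Fin n) (Fin n) ℝ) = C 2 := (map_ofNat C 2).symm
    rw [← hC, h2, ← map_one C] at hs
    simp only [← map_sub, ← map_mul, ← map_add, ← map_mul] at hs
    rw [hdet, hdet, ← Finset.prod_mul_distrib, Finset.prod_eq_zero_iff] at hs
    obtain ⟨j, -, hj⟩ := hs
    rcases eq_or_ne j i with rfl | hji
    · simpa using hj
    · simp [hji] at hj
      norm_num at hj
  have h1 := hval 0 1 (by simp)
  have h2 := hval 1 0 (by simp)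
  simp only [Pi.one_apply]
  nlinarith

end LinearAlgebra

section ContactInvolution

variable {n : ℕ}

/-- Analytic contact involutions of the jet space, other than the identity, that fix the
paraboloid `{(θ, ½|θ|², θ)}` pointwise and send Lagrangian planes with a singular projection to
such planes. -/
structure IsRigidContactInvolution (F : JetSpace n → JetSpace n) : Prop where
  analytic : AnalyticOnNhd ℝ F Set.univ
  involutive : Function.Involutive F
  fixes : ∀ x, F (quadraticLegendrian 0 1 1 x) = quadraticLegendrian 0 1 1 x
  contact : PreservesContact F
  degenerate : ∀ p (P Q : Matrix (Fin n) (Fin n) ℝ), (Pᵀ * Q).IsSymm → (P.det = 0 ∨ Q.det = 0) →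
    (jacθθ F p * P + jacθb F p * Q).det * (jacbθ F p * P + jacbb F p * Q).det = 0
  ne_id : F ≠ id

theorem PreservesContact.isSymm_jacθb_transpose_mul_jacbb {F : JetSpace n → JetSpace n}
    (hF : AnalyticOnNhd ℝ F Set.univ) (hc : PreservesContact F) (p : JetSpace n) :
    ((jacθb F p)ᵀ * jacbb F p).IsSymm := by
  refine Matrix.ext_of_dotProduct_mulVec fun v w => ?_
  have h := hc.conformally_symplectic hF p 0 v 0 w
  simp only [fderiv_contactLift_fst, fderiv_contactLift_snd, mulVec_zero, zero_add,
    dotProduct_zero, sub_zero, mul_zero] at h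
  rw [transpose_mul, transpose_transpose, ← mulVec_dotProduct_mulVec, ← mulVec_dotProduct_mulVec,
    dotProduct_comm (jacθb F p *ᵥ v)]
  linarith

theorem PreservesContact.isSymm_jacθθ_transpose_mul_jacbθ {F : JetSpace n → JetSpace n}
    (hF : AnalyticOnNhd ℝ F Set.univ) (hc : PreservesContact F) (p : JetSpace n) :
    ((jacθθ F p)ᵀ * jacbθ F p).IsSymm := by
  refine Matrix.ext_of_dotProduct_mulVec fun v w => ?_
  have h := hc.conformally_symplectic hF p v 0 w 0
  simp only [fderiv_contactLift_fst, fderiv_contactLift_snd, mulVec_zero, add_zero,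
    zero_dotProduct, sub_zero, mul_zero] at h
  rw [transpose_mul, transpose_transpose, ← mulVec_dotProduct_mulVec, ← mulVec_dotProduct_mulVec,
    dotProduct_comm (jacθθ F p *ᵥ v)]
  linarith

theorem PreservesContact.jacθθ_transpose_mul_jacbb_sub {F : JetSpace n → JetSpace n}
    (hF : AnalyticOnNhd ℝ F Set.univ) (hc : PreservesContact F) (p : JetSpace n) :
    (jacθθ F p)ᵀ * jacbb F p - (jacbθ F p)ᵀ * jacθb F p = conformalFactor F p • 1 := by
  refine Matrix.ext_of_dotProduct_mulVec fun v w => ?_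
  have h := hc.conformally_symplectic hF p v 0 0 w
  simp only [fderiv_contactLift_fst, fderiv_contactLift_snd, mulVec_zero, zero_add, add_zero,
    zero_dotProduct, sub_zero] at h
  rw [sub_mulVec, dotProduct_sub, ← mulVec_dotProduct_mulVec, ← mulVec_dotProduct_mulVec,
    dotProduct_comm (jacθθ F p *ᵥ v), h, smul_mulVec, one_mulVec, dotProduct_smul,
    dotProduct_comm w, smul_eq_mul]

theorem PreservesContact.jacbθ_mul_jacbb_transpose {F : JetSpace n → JetSpace n}
    (hF : AnalyticOnNhd ℝ F Set.univ) (hc : PreservesContact F) {p : JetSpace n}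
    (hρ : conformalFactor F p ≠ 0) :
    jacbθ F p * (jacbb F p)ᵀ = jacbb F p * (jacbθ F p)ᵀ := by
  have h1 := (hc.isSymm_jacθθ_transpose_mul_jacbθ hF p).eq
  have h2 := (hc.isSymm_jacθb_transpose_mul_jacbb hF p).eq
  have h3 := hc.jacθθ_transpose_mul_jacbb_sub hF p
  have h4 := congrArg transpose h3
  simp only [transpose_mul, transpose_transpose, transpose_sub, transpose_smul,
    transpose_one] at h1 h2 h4
  generalize conformalFactor F p = ρ at hρ h3 h4
  generalize jacθθ F p = A, jacθb F p = B, jacbθ F p = C, jacbb F p = D at *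
  have hleft : fromBlocks (ρ⁻¹ • Dᵀ) (-(ρ⁻¹ • Bᵀ)) (-(ρ⁻¹ • Cᵀ)) (ρ⁻¹ • Aᵀ) *
      fromBlocks A B C D = 1 := by
    rw [fromBlocks_multiply, ← fromBlocks_one]
    congr 1
    · rw [smul_mul_assoc, neg_mul, smul_mul_assoc, ← sub_eq_add_neg, ← smul_sub, h4, smul_smul,
        inv_mul_cancel₀ hρ, one_smul]
    · simp [h2]
    · simp [h1]
    · rw [smul_mul_assoc, neg_mul, smul_mul_assoc, neg_add_eq_sub, ← smul_sub, h3, smul_smul,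
        inv_mul_cancel₀ hρ, one_smul]
  have hright := mul_eq_one_comm.1 hleft
  rw [fromBlocks_multiply, ← fromBlocks_one, fromBlocks_inj] at hright
  have h5 := hright.2.2.1
  rw [mul_neg, mul_smul_comm, mul_smul_comm, ← sub_eq_add_neg, ← smul_sub] at h5
  exact sub_eq_zero.1 ((smul_eq_zero.1 h5).resolve_left (inv_ne_zero hρ))

/-- An involution whose differential at a fixed point is the identity is locally the identity. -/
theorem eventually_eq_self_of_involutive {E : Type*} [NormedAddCommGroup E] [NormedSpace ℝ E]
    [CompleteSpace E] {F : E → E} {p : E} (hF : HasStrictFDerivAt F (ContinuousLinearMap.id ℝ E) p)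
    (hinv : Function.Involutive F) (hp : F p = p) : ∀ᶠ x in nhds p, F x = x := by
  have hG : HasStrictFDerivAt (fun x => (2 : ℝ)⁻¹ • (x + F x))
      ((ContinuousLinearEquiv.refl ℝ E : E ≃L[ℝ] E) : E →L[ℝ] E) p := by
    refine (((hasStrictFDerivAt_id p).add hF).const_smul (2 : ℝ)⁻¹).congr_fderiv ?_
    ext x
    change (2 : ℝ)⁻¹ • (x + x) = x
    rw [← two_smul ℝ x, smul_smul, inv_mul_cancel₀ two_ne_zero, one_smul]
  have hleft := hG.eventually_left_inverse
  have hcont : Filter.Tendsto F (nhds p) (nhds p) := by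
    simpa [ContinuousAt, hp] using hF.hasFDerivAt.continuousAt
  filter_upwards [hleft, hcont.eventually hleft] with x h1 h2
  rw [hinv x, add_comm, h1] at h2
  exact h2.symm

namespace IsRigidContactInvolution

variable {F : JetSpace n → JetSpace n}

theorem fderiv_fderiv (hF : IsRigidContactInvolution F) (p u : JetSpace n) :
    fderiv ℝ F (F p) (fderiv ℝ F p u) = u := by
  have hd : ∀ q, DifferentiableAt ℝ F q := fun q => (hF.analytic q trivial).differentiableAt
  have h := fderiv_comp p (hd (F p)) (hd p)
  rw [hF.involutive.comp_self, fderiv_id] at h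
  exact (congrArg (fun L : JetSpace n →L[ℝ] JetSpace n => L u) h).symm

theorem jacobian_mul (hF : IsRigidContactInvolution F) (p : JetSpace n) :
    jacθθ F (F p) * jacθb F p + jacθb F (F p) * jacbb F p = 0 ∧
      jacbθ F (F p) * jacθb F p + jacbb F (F p) * jacbb F p = 1 := by
  have h : ∀ w, contactLift p
      ((jacθθ F (F p) * jacθb F p + jacθb F (F p) * jacbb F p) *ᵥ w)
      ((jacbθ F (F p) * jacθb F p + jacbb F (F p) * jacbb F p) *ᵥ w) = contactLift p 0 w := by
    intro w
    have h1 := hF.fderiv_fderiv p (contactLift p 0 w)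
    rw [hF.contact.fderiv_contactLift, hF.contact.fderiv_contactLift, hF.involutive p] at h1
    simpa [add_mulVec, mulVec_mulVec] using h1
  constructor <;> refine Matrix.ext_of_dotProduct_mulVec fun v w => ?_
  · rw [zero_mulVec]
    exact congrArg (v ⬝ᵥ ·) (congrArg Prod.fst (h w))
  · rw [one_mulVec]
    exact congrArg (v ⬝ᵥ ·) (congrArg (fun q : JetSpace n => q.2.2) (h w))

theorem map_zero (hF : IsRigidContactInvolution F) : F 0 = 0 := by
  simpa [quadraticLegendrian_zero] using hF.fixes 0

theorem jacobian_zero_add (hF : IsRigidContactInvolution F) :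
    jacθθ F 0 + jacθb F 0 = 1 ∧ jacbθ F 0 + jacbb F 0 = 1 := by
  have h : ∀ v, contactLift (0 : JetSpace n)
      ((jacθθ F 0 + jacθb F 0) *ᵥ v) ((jacbθ F 0 + jacbb F 0) *ᵥ v) = contactLift 0 v v := by
    intro v
    have hq : DifferentiableAt ℝ (quadraticLegendrian (0 : JetSpace n) 1 1) 0 :=
      (analyticOnNhd_quadraticLegendrian 0 1 1 0 trivial).differentiableAt
    have h1 : fderiv ℝ (F ∘ quadraticLegendrian 0 1 1) 0 v =
        fderiv ℝ (quadraticLegendrian 0 1 1) 0 v :=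
      congrArg (fun f => fderiv ℝ f 0 v) (funext hF.fixes)
    rw [fderiv_comp _ (hF.analytic _ trivial).differentiableAt hq, ContinuousLinearMap.comp_apply,
      fderiv_quadraticLegendrian _ (by simp [Matrix.IsSymm]), quadraticLegendrian_zero,
      hF.contact.fderiv_contactLift, hF.map_zero] at h1
    simpa [add_mulVec] using h1
  constructor <;> refine Matrix.ext_of_dotProduct_mulVec fun v w => ?_ <;> rw [one_mulVec]
  · exact congrArg (v ⬝ᵥ ·) (congrArg Prod.fst (h w))
  · exact congrArg (v ⬝ᵥ ·) (congrArg (fun q : JetSpace n => q.2.2) (h w))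

theorem eq_id_of_jacobian_zero (hF : IsRigidContactInvolution F) (hθb : jacθb F 0 = 0)
    (hbb : jacbb F 0 = 1) (hρ : conformalFactor F 0 = 1) : F = id := by
  obtain ⟨h1, h2⟩ := hF.jacobian_zero_add
  rw [hθb, add_zero] at h1
  rw [hbb, add_eq_right] at h2
  have hξ : ∀ v w, fderiv ℝ F 0 (contactLift 0 v w) = contactLift 0 v w := fun v w => by
    rw [hF.contact.fderiv_contactLift, hF.map_zero, h1, h2, hθb, hbb]
    simp
  have hs : (fderiv ℝ F 0 (0, 1, 0)).2.1 = 1 := by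
    simpa [conformalFactor, hF.map_zero] using hρ
  have hsplit : ∀ u : JetSpace n, u = contactLift 0 u.1 u.2.2 + u.2.1 • (0, 1, 0) := fun u => by
    simp [contactLift]
  have ha : fderiv ℝ F 0 (0, 1, 0) = (0, 1, 0) := by
    have h3 := hF.fderiv_fderiv 0 (0, 1, 0)
    obtain ⟨v, w, h4⟩ : ∃ v w, fderiv ℝ F 0 (0, 1, 0) = contactLift 0 v w + (0, 1, 0) :=
      ⟨_, _, by simpa [hs] using hsplit (fderiv ℝ F 0 (0, 1, 0))⟩
    rw [hF.map_zero, h4, map_add, hξ, h4, ← add_assoc, add_eq_right, ← two_smul ℝ,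
      smul_eq_zero] at h3
    rw [h4, h3.resolve_left two_ne_zero, zero_add]
  have hd : HasStrictFDerivAt F (ContinuousLinearMap.id ℝ (JetSpace n)) 0 := by
    refine (hF.analytic 0 trivial).hasStrictFDerivAt.congr_fderiv ?_
    refine ContinuousLinearMap.ext fun u => ?_
    conv_lhs => rw [hsplit u, map_add, hξ, map_smul, ha, ← hsplit u]
    rfl
  exact hF.analytic.eq_of_eventuallyEq (fun p _ => analyticAt_id)
    (eventually_eq_self_of_involutive hd hF.involutive hF.map_zero)

theorem jacobian_zero (hn : 1 ≤ n) (hF : IsRigidContactInvolution F) :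
    jacθθ F 0 = 0 ∧ jacθb F 0 = 1 ∧ jacbθ F 0 = 1 ∧ jacbb F 0 = 0 ∧ conformalFactor F 0 = -1 := by
  have : NeZero n := ⟨by omega⟩
  obtain ⟨h1, h2⟩ := hF.jacobian_zero_add
  obtain ⟨h3, h4⟩ := hF.jacobian_mul 0
  have h5 := (hF.contact.isSymm_jacθb_transpose_mul_jacbb hF.analytic 0).eq
  have h6 := hF.contact.jacθθ_transpose_mul_jacbb_sub hF.analytic 0
  have hdeg := hF.degenerate 0
  have hid := hF.eq_id_of_jacobian_zero
  rw [hF.map_zero] at h3 h4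
  rw [eq_sub_of_add_eq h1] at *
  rw [eq_sub_of_add_eq h2] at *
  generalize conformalFactor F 0 = ρ at *
  generalize jacθb F 0 = X, jacbb F 0 = Y at *
  rw [transpose_mul, transpose_transpose] at h5
  have hY : Y = X + ρ • 1 := by
    simp only [transpose_sub, transpose_one, sub_mul, one_mul] at h6
    rw [← h6, h5]
    abel
  subst hY
  have h7 : (1 + ρ) • X = 0 := by
    rw [← h3]
    simp only [sub_mul, mul_add, one_mul, mul_smul_comm, mul_one, add_smul, one_smul]
    abel
  have h8 : ρ * ρ = 1 := by
    have : (1 + ρ) • X + (ρ * ρ) • (1 : Matrix (Fin n) (Fin n) ℝ) = 1 := by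
      refine Eq.trans ?_ h4
      simp only [sub_mul, mul_add, add_mul, one_mul, mul_smul_comm, smul_mul_assoc, mul_one,
        add_smul, one_smul, smul_add, smul_smul]
      abel
    rw [h7, zero_add] at this
    simpa using congrFun (congrFun this 0) 0
  rcases mul_self_eq_one_iff.1 h8 with rfl | rfl
  · have hX : X = 0 := (smul_eq_zero.1 h7).resolve_left (by norm_num)
    exact absurd (hid hX (by simp [hX]) rfl) hF.ne_id
  · have hX : X.IsSymm := by
      simp only [neg_smul, one_smul, transpose_add, transpose_neg, transpose_one, add_mul, mul_add,
        neg_mul, one_mul, mul_neg, mul_one, add_right_inj, neg_inj] at h5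
      exact h5.symm
    have hX1 : X = 1 := hX.eq_one_of_det_mul_det_eq_zero fun P Q hPQ hdet => by
      have h := hdeg P Q hPQ hdet
      have e1 : (1 : Matrix (Fin n) (Fin n) ℝ) - (X + (-1 : ℝ) • 1) = 2 - X := by
        rw [← one_add_one_eq_two, neg_smul, one_smul]; abel
      have e2 : X + (-1 : ℝ) • (1 : Matrix (Fin n) (Fin n) ℝ) = X - 1 := by
        rw [neg_smul, one_smul, sub_eq_add_neg]
      rwa [e1, e2] at h
    simp [hX1]

end IsRigidContactInvolution

end ContactInvolution

section Rigidity

variable {n : ℕ} {F : JetSpace n → JetSpace n}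

namespace IsRigidContactInvolution

theorem det_jacbθ_mul_add_jacbb (hn : 1 ≤ n) (hF : IsRigidContactInvolution F)
    {R : Matrix (Fin n) (Fin n) ℝ} (hR : R.IsSymm) (hdet : R.det = 0) (p : JetSpace n) :
    (jacbθ F p * R + jacbb F p).det = 0 := by
  obtain ⟨h1, h2, -⟩ := hF.jacobian_zero hn
  have hθ : AnalyticOnNhd ℝ (fun p => (jacθθ F p * R + jacθb F p).det) Set.univ :=
    .matrix_det (analyticOnNhd_add_mul_apply (fun i j => (analyticOnNhd_jacobian hF.analytic i j).1)
      (fun i j => (analyticOnNhd_jacobian hF.analytic i j).2.1) R)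
  have hb : AnalyticOnNhd ℝ (fun p => (jacbθ F p * R + jacbb F p).det) Set.univ :=
    .matrix_det (analyticOnNhd_add_mul_apply
      (fun i j => (analyticOnNhd_jacobian hF.analytic i j).2.2.1)
      (fun i j => (analyticOnNhd_jacobian hF.analytic i j).2.2.2) R)
  refine congrFun (hb.eq_of_eventuallyEq (analyticOnNhd_const (v := (0 : ℝ))) (z₀ := 0) ?_) p
  have hne : ∀ᶠ q in nhds 0, (jacθθ F q * R + jacθb F q).det ≠ 0 :=
    (hθ 0 trivial).continuousAt.eventually_ne (by simp [h1, h2])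
  filter_upwards [hne] with q hq
  have h := hF.degenerate q R 1 (by simpa [Matrix.IsSymm] using hR.symm) (Or.inl hdet)
  rw [mul_one, mul_one] at h
  exact (mul_eq_zero.1 h).resolve_left hq

theorem jacbb_eq_zero (hn : 1 ≤ n) (hF : IsRigidContactInvolution F) (p : JetSpace n) :
    jacbb F p = 0 := by
  obtain ⟨-, -, h3, -, h5⟩ := hF.jacobian_zero hn
  have hρ : ∀ᶠ q in nhds 0, conformalFactor F q ≠ 0 := by
    have hcont : ContinuousAt (conformalFactor F) 0 := by
      have h1 : ContinuousAt (fun q => fderiv ℝ F q (0, 1, 0)) 0 :=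
        ((hF.analytic.fderiv 0 trivial).continuousAt).clm_apply continuousAt_const
      have h2 := (hF.analytic 0 trivial).continuousAt
      unfold conformalFactor dotProduct
      fun_prop
    exact hcont.eventually_ne (by rw [h5]; norm_num)
  have hdet : ∀ᶠ q in nhds 0, (jacbθ F q).det ≠ 0 :=
    (AnalyticOnNhd.matrix_det (fun i j => (analyticOnNhd_jacobian hF.analytic i j).2.2.1) 0
      trivial).continuousAt.eventually_ne (by simp [h3])
  have hzero : ∀ᶠ q in nhds 0, jacbb F q = 0 := by
    filter_upwards [hρ, hdet] with q hρq hq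
    have hunit : IsUnit (jacbθ F q).det := isUnit_iff_ne_zero.2 hq
    have hsymm := hF.contact.jacbθ_mul_jacbb_transpose hF.analytic hρq
    have hdeg := fun R hR hdet => hF.det_jacbθ_mul_add_jacbb (R := R) hn hR hdet q
    generalize jacbθ F q = B, jacbb F q = D at *
    have hK : (B⁻¹ * D).IsSymm := by
      rw [Matrix.IsSymm, transpose_mul]
      calc Dᵀ * B⁻¹ᵀ = B⁻¹ * (B * Dᵀ) * B⁻¹ᵀ := by rw [nonsing_inv_mul_cancel_left _ _ hunit]
        _ = B⁻¹ * D * (B⁻¹ * B)ᵀ := by rw [hsymm, transpose_mul]; simp only [Matrix.mul_assoc]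
        _ = B⁻¹ * D := by rw [nonsing_inv_mul _ hunit, transpose_one, Matrix.mul_one]
    have hK0 : B⁻¹ * D = 0 := hK.eq_zero_of_det_add_eq_zero fun R hR hdet => by
      have h : R + B⁻¹ * D = B⁻¹ * (B * R + D) := by
        rw [mul_add, nonsing_inv_mul_cancel_left _ _ hunit]
      rw [h, det_mul, hdeg R hR hdet, mul_zero]
    rw [← mul_nonsing_inv_cancel_left _ D hunit, hK0, mul_zero]
  ext i j
  exact congrFun ((analyticOnNhd_jacobian hF.analytic i j).2.2.2.eq_of_eventuallyEq
    (analyticOnNhd_const (v := (0 : ℝ))) (hzero.mono fun q hq => by simp [hq])) p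

theorem jacθθ_eq_zero (hn : 1 ≤ n) (hF : IsRigidContactInvolution F) (p : JetSpace n) :
    jacθθ F p = 0 := by
  obtain ⟨h1, h2⟩ := hF.jacobian_mul (F p)
  rw [hF.involutive p, hF.jacbb_eq_zero hn, mul_zero, add_zero] at h1
  rw [hF.involutive p, hF.jacbb_eq_zero hn p, zero_mul, add_zero] at h2
  rw [← mul_one (jacθθ F p), ← mul_eq_one_comm.1 h2, ← mul_assoc, h1, zero_mul]

end IsRigidContactInvolution

theorem eq_of_fderiv_along_segment_eq_zero {E H : Type*} [NormedAddCommGroup E] [NormedSpace ℝ E]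
    [NormedAddCommGroup H] [NormedSpace ℝ H] {f : E → H} (hf : Differentiable ℝ f) {p u : E}
    (h : ∀ t : ℝ, fderiv ℝ f (p + t • u) u = 0) : f (p + u) = f p := by
  have hd : ∀ t : ℝ, HasDerivAt (fun t : ℝ => f (p + t • u)) 0 t := fun t => by
    have h1 : HasDerivAt (fun t : ℝ => p + t • u) u t := by
      simpa using ((hasDerivAt_id t).smul_const u).const_add p
    exact h t ▸ (hf (p + t • u)).hasFDerivAt.comp_hasDerivAt t h1
  have := is_const_of_deriv_eq_zero (fun t => (hd t).differentiableAt) (fun t => (hd t).deriv) 1 0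
  simpa using this

namespace IsRigidContactInvolution

/-- The `b`-component and the Legendre conjugate of the `a`-component of `F` depend only on
`(θ, a)`. -/
theorem vertical_invariants (hn : 1 ≤ n) (hF : IsRigidContactInvolution F) (θ : Fin n → ℝ) (a : ℝ)
    (b β : Fin n → ℝ) :
    (F (θ, a, b)).2.2 = (F (θ, a, β)).2.2 ∧
      (F (θ, a, b)).2.2 ⬝ᵥ (F (θ, a, b)).1 - (F (θ, a, b)).2.1 =
        (F (θ, a, β)).2.2 ⬝ᵥ (F (θ, a, β)).1 - (F (θ, a, β)).2.1 := by
  have hd : Differentiable ℝ F := fun q => (hF.analytic q trivial).differentiableAt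
  have hend : (θ, a, β) + ((0, 0, b - β) : JetSpace n) = (θ, a, b) := by simp
  have hlift : ∀ q : JetSpace n, ((0, 0, b - β) : JetSpace n) = contactLift q 0 (b - β) :=
    fun q => by simp [contactLift]
  have hb : ∀ q, fderiv ℝ (fun q => (F q).2.2) q (0, 0, b - β) = 0 := fun q => by
    rw [(hd q).hasFDerivAt.snd.snd.fderiv, hlift q]
    change (fderiv ℝ F q (contactLift q 0 (b - β))).2.2 = 0
    simp [fderiv_contactLift_snd, hF.jacbb_eq_zero hn]
  constructor
  · rw [← hend]
    exact eq_of_fderiv_along_segment_eq_zero hd.snd.snd fun t => hb _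
  · rw [← hend]
    have hdot : Differentiable ℝ (fun q => (F q).2.2 ⬝ᵥ (F q).1) := fun q =>
      (AnalyticOnNhd.dotProduct_univ (fun q hq => (analyticAt_snd.comp analyticAt_snd).comp
        (hF.analytic q hq)) (fun q hq => analyticAt_fst.comp (hF.analytic q hq)) q
          trivial).differentiableAt
    refine eq_of_fderiv_along_segment_eq_zero (f := fun q => (F q).2.2 ⬝ᵥ (F q).1 - (F q).2.1)
      (hdot.sub hd.snd.fst) fun t => ?_
    generalize (θ, a, β) + t • ((0, 0, b - β) : JetSpace n) = q
    rw [fderiv_fun_sub (hdot q) (hd q).snd.fst, _root_.sub_apply,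
      fderiv_dotProduct_apply (hd q).snd.snd (hd q).fst, hb, zero_dotProduct, zero_add,
      (hd q).hasFDerivAt.snd.fst.fderiv, (hd q).hasFDerivAt.fst.fderiv, hlift q]
    exact sub_eq_zero.2 (hF.contact q 0 (b - β)).symm

/-- The `θ`- and `a`-components of `F` are constant along the leaves `b = const`,
`⟨b, θ⟩ - a = const`. -/
theorem horizontal_invariants (hn : 1 ≤ n) (hF : IsRigidContactInvolution F)
    (θ v b : Fin n → ℝ) (a : ℝ) :
    (F (θ + v, a + b ⬝ᵥ v, b)).1 = (F (θ, a, b)).1 ∧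
      (F (θ + v, a + b ⬝ᵥ v, b)).2.1 = (F (θ, a, b)).2.1 := by
  have hd : Differentiable ℝ F := fun q => (hF.analytic q trivial).differentiableAt
  have hend : (θ, a, b) + ((v, b ⬝ᵥ v, 0) : JetSpace n) = (θ + v, a + b ⬝ᵥ v, b) := by simp
  have hlift : ∀ t : ℝ, ((v, b ⬝ᵥ v, 0) : JetSpace n) =
      contactLift ((θ, a, b) + t • ((v, b ⬝ᵥ v, 0) : JetSpace n)) v 0 :=
    fun q => by simp [contactLift]
  have hθ : ∀ q, (fderiv ℝ F q (contactLift q v 0)).1 = 0 := fun q => by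
    simp [fderiv_contactLift_fst, hF.jacθθ_eq_zero hn]
  rw [← hend]
  constructor
  · refine eq_of_fderiv_along_segment_eq_zero (f := fun q => (F q).1) hd.fst fun t => ?_
    rw [(hd _).hasFDerivAt.fst.fderiv]
    change (fderiv ℝ F _ _).1 = 0
    conv_lhs => enter [1, 2]; rw [hlift t]
    exact hθ _
  · refine eq_of_fderiv_along_segment_eq_zero (f := fun q => (F q).2.1) hd.snd.fst fun t => ?_
    rw [(hd _).hasFDerivAt.snd.fst.fderiv]
    change (fderiv ℝ F _ _).2.1 = 0
    conv_lhs => enter [1, 1, 2]; rw [hlift t]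
    rw [hF.contact, hθ, dotProduct_zero]

theorem dotProduct_sub_eq_of_tangent (hn : 1 ≤ n) (hF : IsRigidContactInvolution F)
    (p : JetSpace n) (x : Fin n → ℝ)
    (hx : p.2.2 ⬝ᵥ x - 1 / 2 * (x ⬝ᵥ x) = p.2.2 ⬝ᵥ p.1 - p.2.1) :
    x ⬝ᵥ (F p).1 - (F p).2.1 = 1 / 2 * (x ⬝ᵥ x) := by
  obtain ⟨θ, a, b⟩ := p
  have hfix : F (x, 1 / 2 * (x ⬝ᵥ x), x) = (x, 1 / 2 * (x ⬝ᵥ x), x) := by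
    simpa [quadraticLegendrian] using hF.fixes x
  obtain ⟨h1, h2⟩ := hF.horizontal_invariants hn θ (x - θ) b a
  obtain ⟨h3, h4⟩ := hF.vertical_invariants hn x (1 / 2 * (x ⬝ᵥ x)) b x
  have ha : a + b ⬝ᵥ (x - θ) = 1 / 2 * (x ⬝ᵥ x) := by
    rw [dotProduct_sub]
    simp only at hx
    linarith
  rw [add_sub_cancel, ha] at h1 h2
  rw [hfix] at h3 h4
  rw [h3, h1, h2] at h4
  simp only at h4
  linarith

theorem eq_legendre (hn : 1 ≤ n) (hF : IsRigidContactInvolution F) :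
    F = fun p => (p.2.2, p.2.2 ⬝ᵥ p.1 - p.2.1, p.1) := by
  have hlocal : ∀ p : JetSpace n, p.2.2 ⬝ᵥ p.1 - p.2.1 < 1 / 2 * (p.2.2 ⬝ᵥ p.2.2) →
      (F p).1 = p.2.2 ∧ (F p).2.1 = p.2.2 ⬝ᵥ p.1 - p.2.1 := by
    intro p hp
    obtain ⟨r, hr, hr2⟩ : ∃ r : ℝ, r ≠ 0 ∧
        r * r = p.2.2 ⬝ᵥ p.2.2 - 2 * (p.2.2 ⬝ᵥ p.1 - p.2.1) := by
      have hpos : 0 < p.2.2 ⬝ᵥ p.2.2 - 2 * (p.2.2 ⬝ᵥ p.1 - p.2.1) := by linarith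
      exact ⟨_, (Real.sqrt_pos.2 hpos).ne', Real.mul_self_sqrt hpos.le⟩
    have hsphere : ∀ v : Fin n → ℝ, v ⬝ᵥ v = r * r → p.2.2 ⬝ᵥ (F p).1 + v ⬝ᵥ (F p).1 - (F p).2.1 =
        1 / 2 * (p.2.2 ⬝ᵥ p.2.2 + 2 * (v ⬝ᵥ p.2.2) + r * r) := by
      intro v hv
      have h := hF.dotProduct_sub_eq_of_tangent hn p (p.2.2 + v) (by
        simp only [add_dotProduct, dotProduct_add, hv, dotProduct_comm p.2.2 v]
        linarith)
      simp only [add_dotProduct, dotProduct_add, hv, dotProduct_comm p.2.2 v] at h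
      linarith
    have hθ : (F p).1 = p.2.2 := by
      funext i
      have h1 := hsphere (Pi.single i r) (by simp)
      have h2 := hsphere (-Pi.single i r) (by simp)
      simp only [neg_dotProduct, single_dotProduct] at h1 h2
      exact mul_left_cancel₀ hr (by linarith)
    refine ⟨hθ, ?_⟩
    have h := hsphere (Pi.single ⟨0, hn⟩ r) (by simp)
    rw [hθ] at h
    linarith
  have hb : AnalyticOnNhd ℝ (fun p : JetSpace n => p.2.2) Set.univ := fun p _ =>
    analyticAt_snd.comp analyticAt_snd
  have hc : AnalyticOnNhd ℝ (fun p : JetSpace n => p.2.2 ⬝ᵥ p.1 - p.2.1) Set.univ :=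
    (hb.dotProduct_univ fun p _ => analyticAt_fst).sub fun p _ => analyticAt_fst.comp analyticAt_snd
  have hnear : ∀ᶠ p : JetSpace n in nhds (0, 1, 0),
      p.2.2 ⬝ᵥ p.1 - p.2.1 < 1 / 2 * (p.2.2 ⬝ᵥ p.2.2) :=
    (hc _ trivial).continuousAt.eventually_lt
      ((analyticOnNhd_const.mul (hb.dotProduct_univ hb)) _ trivial).continuousAt (by simp)
  have hθ : (fun p => (F p).1) = fun p => p.2.2 :=
    AnalyticOnNhd.eq_of_eventuallyEq (fun p hp => analyticAt_fst.comp (hF.analytic p hp)) hb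
      (hnear.mono fun p hp => (hlocal p hp).1)
  have ha : (fun p => (F p).2.1) = fun p => p.2.2 ⬝ᵥ p.1 - p.2.1 :=
    AnalyticOnNhd.eq_of_eventuallyEq
      (fun p hp => (analyticAt_fst.comp analyticAt_snd).comp (hF.analytic p hp)) hc
      (hnear.mono fun p hp => (hlocal p hp).2)
  funext p
  refine Prod.ext (congrFun hθ p) (Prod.ext (congrFun ha p) ?_)
  have h := congrFun hθ (F p)
  simp only [hF.involutive p] at h
  exact h.symm

end IsRigidContactInvolution

end Rigidity

section Transform

variable {n : ℕ}

theorem bijective_mulVec_iff {N : Matrix (Fin n) (Fin n) ℝ} :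
    Function.Bijective (fun v => N *ᵥ v) ↔ N.det ≠ 0 := by
  rw [← isUnit_iff_ne_zero, ← isUnit_iff_isUnit_det]
  exact ⟨fun h => mulVec_injective_iff_isUnit.1 h.1, fun h =>
    ⟨mulVec_injective_iff_isUnit.2 h, mulVec_surjective_iff_isUnit.2 h⟩⟩

theorem mem_regPts_of_fderiv_eq {f : (Fin n → ℝ) → Fin n → ℝ} {x : Fin n → ℝ}
    {N : Matrix (Fin n) (Fin n) ℝ} (h : ∀ v, fderiv ℝ f x v = N *ᵥ v) :
    x ∈ RegPts n f ↔ N.det ≠ 0 := by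
  rw [← bijective_mulVec_iff, ← funext h]
  rfl

theorem fderiv_components {g : (Fin n → ℝ) → JetSpace n} (hg : Differentiable ℝ g)
    (x v : Fin n → ℝ) :
    fderiv ℝ (unpackTriple g).1 x v = (fderiv ℝ g x v).1 ∧
      fderiv ℝ (unpackTriple g).2.2 x v = (fderiv ℝ g x v).2.2 := by
  constructor
  · change fderiv ℝ (fun x => (g x).1) x v = _
    rw [(hg x).hasFDerivAt.fst.fderiv]; rfl
  · change fderiv ℝ (fun x => (g x).2.2) x v = _
    rw [(hg x).hasFDerivAt.snd.snd.fderiv]; rfl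

theorem differentiable_quadraticLegendrian (p : JetSpace n) (P Q : Matrix (Fin n) (Fin n) ℝ) :
    Differentiable ℝ (quadraticLegendrian p P Q) := fun x =>
  (analyticOnNhd_quadraticLegendrian p P Q x trivial).differentiableAt

theorem mem_regPts_quadraticLegendrian (p : JetSpace n) {P Q : Matrix (Fin n) (Fin n) ℝ}
    (hPQ : (Pᵀ * Q).IsSymm) (x : Fin n → ℝ) :
    (x ∈ RegPts n (unpackTriple (quadraticLegendrian p P Q)).1 ↔ P.det ≠ 0) ∧
      (x ∈ RegPts n (unpackTriple (quadraticLegendrian p P Q)).2.2 ↔ Q.det ≠ 0) := by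
  have h := fderiv_components (differentiable_quadraticLegendrian p P Q) x
  simp only [fderiv_quadraticLegendrian p hPQ] at h
  exact ⟨mem_regPts_of_fderiv_eq fun v => (h v).1, mem_regPts_of_fderiv_eq fun v => (h v).2⟩

theorem quadraticLegendrian_mem_GXset (p : JetSpace n) {P Q : Matrix (Fin n) (Fin n) ℝ}
    (hPQ : (Pᵀ * Q).IsSymm) (hP : P.det ≠ 0) (hQ : Q.det ≠ 0) :
    unpackTriple (quadraticLegendrian p P Q) ∈ GXset n := by
  have hreg := mem_regPts_quadraticLegendrian p hPQ
  refine ⟨smoothTriple_unpackTriple (analyticOnNhd_quadraticLegendrian p P Q).contDiff,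
    (creative_unpackTriple_iff (differentiable_quadraticLegendrian p P Q)).2 fun x v => ?_,
    fun x => subset_closure ((hreg x).1.2 hP), fun x => subset_closure ((hreg x).2.2 hQ)⟩
  rw [fderiv_quadraticLegendrian p hPQ]
  rfl

theorem isRigidContactInvolution_of_transform (hn : 1 ≤ n) {T : TripleMap n → TripleMap n}
    (hmap : ∀ Φ ∈ GXset n, T Φ ∈ GXset n)
    (hinv : ∀ Φ ∈ GXset n, T (T Φ) = Φ)
    (hfix : ∀ Φ ∈ GXset n, (Φ ∈ GYset n → T Φ = Φ) ∧ (Φ ∉ GYset n → T Φ ≠ Φ))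
    {F : JetSpace n → JetSpace n} (hF : AnalyticOnNhd ℝ F Set.univ)
    (hTF : ∀ Φ ∈ GXset n, packTriple n (T Φ) = F ∘ packTriple n Φ) :
    IsRigidContactInvolution F := by
  have hFd : Differentiable ℝ F := fun q => (hF q trivial).differentiableAt
  have hTF' : ∀ Φ ∈ GXset n, T Φ = unpackTriple (F ∘ packTriple n Φ) := fun Φ hΦ => by
    rw [← hTF Φ hΦ, unpackTriple_packTriple]
  have hS1 : ((1 : Matrix (Fin n) (Fin n) ℝ)ᵀ * 1).IsSymm := by simp [Matrix.IsSymm]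
  have hS2 : ((1 : Matrix (Fin n) (Fin n) ℝ)ᵀ * (2 : ℝ) • 1).IsSymm := by simp [Matrix.IsSymm]
  have hmem1 : ∀ p : JetSpace n, unpackTriple (quadraticLegendrian p 1 1) ∈ GXset n := fun p =>
    quadraticLegendrian_mem_GXset p hS1 (by simp) (by simp)
  have hmem2 : ∀ p : JetSpace n, unpackTriple (quadraticLegendrian p 1 ((2 : ℝ) • 1)) ∈ GXset n :=
    fun p => quadraticLegendrian_mem_GXset p hS2 (by simp) (by simp)
  have hinvol : Function.Involutive F := fun p => by
    have h := hTF _ (hmap _ (hmem1 p))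
    rw [hinv _ (hmem1 p), hTF _ (hmem1 p), packTriple_unpackTriple] at h
    simpa [quadraticLegendrian_zero] using (congrFun h 0).symm
  have hcomp : ∀ p {P Q : Matrix (Fin n) (Fin n) ℝ}, (Pᵀ * Q).IsSymm → ∀ x v,
      fderiv ℝ (F ∘ quadraticLegendrian p P Q) x v = fderiv ℝ F (quadraticLegendrian p P Q x)
        (contactLift (quadraticLegendrian p P Q x) (P *ᵥ v) (Q *ᵥ v)) := by
    intro p P Q hPQ x v
    rw [fderiv_comp x (hFd _) (differentiable_quadraticLegendrian p P Q x),
      ContinuousLinearMap.comp_apply, fderiv_quadraticLegendrian p hPQ]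
  have hdcomp : ∀ p (P Q : Matrix (Fin n) (Fin n) ℝ),
      Differentiable ℝ (F ∘ quadraticLegendrian p P Q) := fun p P Q =>
    hFd.comp (differentiable_quadraticLegendrian p P Q)
  have hcontact : PreservesContact F := by
    have hplane : ∀ p {P Q : Matrix (Fin n) (Fin n) ℝ}, (Pᵀ * Q).IsSymm →
        unpackTriple (quadraticLegendrian p P Q) ∈ GXset n → ∀ v,
        (fderiv ℝ F p (contactLift p (P *ᵥ v) (Q *ᵥ v))).2.1 =
          (F p).2.2 ⬝ᵥ (fderiv ℝ F p (contactLift p (P *ᵥ v) (Q *ᵥ v))).1 := by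
      intro p P Q hPQ hmem v
      have h := (hmap _ hmem).2.1
      rw [hTF' _ hmem, packTriple_unpackTriple, creative_unpackTriple_iff (hdcomp p P Q)] at h
      have h0 := h 0 v
      rwa [hcomp p hPQ, Function.comp_apply, quadraticLegendrian_zero] at h0
    intro p v w
    have hsplit : contactLift p v w = contactLift p ((1 : Matrix (Fin n) (Fin n) ℝ) *ᵥ (2 • v - w))
        ((1 : Matrix (Fin n) (Fin n) ℝ) *ᵥ (2 • v - w)) +
        contactLift p ((1 : Matrix (Fin n) (Fin n) ℝ) *ᵥ (w - v))
          (((2 : ℝ) • (1 : Matrix (Fin n) (Fin n) ℝ)) *ᵥ (w - v)) := by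
      rw [← contactLift_add]
      congr 1
      · simp only [one_mulVec]
        module
      · simp only [one_mulVec, smul_mulVec]
        module
    rw [hsplit, map_add, Prod.snd_add, Prod.fst_add, Prod.fst_add, dotProduct_add,
      hplane p hS1 (hmem1 p), hplane p hS2 (hmem2 p)]
  refine ⟨hF, hinvol, fun x => ?_, hcontact, fun p P Q hPQ hdet => ?_, fun hid => ?_⟩
  · have hY : unpackTriple (quadraticLegendrian (0 : JetSpace n) 1 1) ∈ GYset n := by
      refine ⟨fun x => x, contDiff_id, (?_ : Dense (RegPts n fun x => x)), ?_⟩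
      · have := (hmem1 0).2.2.1
        simpa [unpackTriple, quadraticLegendrian] using this
      · simp [unpackTriple, quadraticLegendrian, dotProduct, sq]
    have h := hTF _ (hmem1 0)
    rw [(hfix _ (hmem1 0)).1 hY] at h
    exact (congrFun h x).symm
  · by_contra hne
    obtain ⟨h1, h2⟩ := mul_ne_zero_iff.1 hne
    have han : AnalyticOnNhd ℝ (F ∘ quadraticLegendrian p P Q) Set.univ :=
      hF.comp (analyticOnNhd_quadraticLegendrian p P Q) (Set.mapsTo_univ _ _)
    have hcomponents := fderiv_components (hdcomp p P Q) 0
    simp only [hcomp p hPQ, quadraticLegendrian_zero, fderiv_contactLift_fst,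
      fderiv_contactLift_snd, mulVec_mulVec, ← add_mulVec] at hcomponents
    have hmem : unpackTriple (F ∘ quadraticLegendrian p P Q) ∈ GXset n := by
      refine ⟨smoothTriple_unpackTriple han.contDiff,
        (creative_unpackTriple_iff (hdcomp p P Q)).2 fun x v => ?_,
        dense_regPts_of_analytic (fun x hx => analyticAt_fst.comp (han x hx))
          ((mem_regPts_of_fderiv_eq fun v => (hcomponents v).1).2 h1),
        dense_regPts_of_analytic
          (fun x hx => (analyticAt_snd.comp analyticAt_snd).comp (han x hx))
          ((mem_regPts_of_fderiv_eq fun v => (hcomponents v).2).2 h2)⟩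
      rw [hcomp p hPQ]
      exact hcontact _ _ _
    have hT := hmap _ hmem
    rw [hTF' _ hmem, packTriple_unpackTriple, ← Function.comp_assoc, hinvol.comp_self,
      Function.id_comp] at hT
    obtain ⟨x, hx⟩ := hT.2.2.1.nonempty
    obtain ⟨y, hy⟩ := hT.2.2.2.nonempty
    exact hdet.elim ((mem_regPts_quadraticLegendrian p hPQ x).1.1 hx)
      ((mem_regPts_quadraticLegendrian p hPQ y).2.1 hy)
  · refine (hfix _ (hmem2 0)).2 ?_ (by rw [hTF' _ (hmem2 0), hid]; rfl)
    rintro ⟨θ, -, -, h⟩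
    have h1 := congrFun (congrArg (fun Φ : TripleMap n => Φ.1) h) 1
    have h2 := congrFun (congrArg (fun Φ : TripleMap n => Φ.2.2) h) 1
    have h3 := congrFun (h1.trans h2.symm) ⟨0, hn⟩
    simp [unpackTriple, quadraticLegendrian, smul_mulVec] at h3

end Transform

/-- **Theorem 2**: a transform of `GX` which is an involution, whose fixed point set is
exactly `GY`, and which is induced by a real-analytic map `F : ℝ^{2n+1} → ℝ^{2n+1}`,
must be the Legendre involution. -/
theorem legendre_involution_characterization (n : ℕ) (hn : 1 ≤ n)
    (T : TripleMap n → TripleMap n)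
    (hmap : ∀ Φ ∈ GXset n, T Φ ∈ GXset n)
    (hinv : ∀ Φ ∈ GXset n, T (T Φ) = Φ)
    (hfix : ∀ Φ ∈ GXset n, (Φ ∈ GYset n → T Φ = Φ) ∧ (Φ ∉ GYset n → T Φ ≠ Φ))
    (F : (Fin n → ℝ) × ℝ × (Fin n → ℝ) → (Fin n → ℝ) × ℝ × (Fin n → ℝ))
    (hF : AnalyticOnNhd ℝ F Set.univ)
    (hTF : ∀ Φ ∈ GXset n, packTriple n (T Φ) = F ∘ packTriple n Φ) :
    ∀ Φ ∈ GXset n, T Φ = Legendre n Φ := by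
  intro Φ hΦ
  have hL := (isRigidContactInvolution_of_transform hn hmap hinv hfix hF hTF).eq_legendre hn
  have h := hTF Φ hΦ
  rw [hL] at h
  exact congrArg unpackTriple h
end

section
/- Let n ≥ 1, let t = (t₁, …, tₙ) ∈ ℝⁿ, and let Φ = (θ, a, b) : ℝⁿ → ℝ^{2n+1} be smooth and satisfy the creative condition da = Σᵢ bᵢ dθᵢ. Define θ̃ᵢ = (tᵢ − 1)θᵢ + (2 − tᵢ)bᵢ, b̃ᵢ = tᵢθᵢ + (1 − tᵢ)bᵢ, and ã = Σᵢ₌₁ⁿ [ (tᵢ(tᵢ − 1)/2)·θᵢ² + tᵢ(2 − tᵢ)·θᵢbᵢ + ((1 − tᵢ)(2 − tᵢ)/2)·bᵢ² ] − a. Then (θ̃, ã, b̃) satisfies the creative condition: dã = Σᵢ₌₁ⁿ b̃ᵢ dθ̃ᵢ. -/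
open scoped BigOperators

/-- CASE II computation in the proof of Theorem 2: if `(θ, a, b)` satisfies the
creative condition `da = ∑ᵢ bᵢ dθᵢ`, then for any parameters `t₁, …, tₙ` the triple
`(θ̃, ã, b̃)` with `θ̃ᵢ = (tᵢ−1)θᵢ + (2−tᵢ)bᵢ`, `b̃ᵢ = tᵢθᵢ + (1−tᵢ)bᵢ` and
`ã = ∑ᵢ [ (tᵢ(tᵢ−1)/2)θᵢ² + tᵢ(2−tᵢ)θᵢbᵢ + ((1−tᵢ)(2−tᵢ)/2)bᵢ² ] − a`
also satisfies the creative condition `dã = ∑ᵢ b̃ᵢ dθ̃ᵢ`. -/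
theorem creative_condition_of_transformed_triple (n : ℕ) (hn : 1 ≤ n) (t : Fin n → ℝ)
    (θ b : (Fin n → ℝ) → Fin n → ℝ) (a : (Fin n → ℝ) → ℝ)
    (hθ : ContDiff ℝ (⊤ : ℕ∞) θ) (ha : ContDiff ℝ (⊤ : ℕ∞) a) (hb : ContDiff ℝ (⊤ : ℕ∞) b)
    (hcr : ∀ x v : Fin n → ℝ,
      fderiv ℝ a x v = ∑ i, b x i * fderiv ℝ (fun y => θ y i) x v) :
    ∀ x v : Fin n → ℝ,
      fderiv ℝ (fun y =>
          (∑ i, ((t i * (t i - 1) / 2) * θ y i ^ 2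
            + t i * (2 - t i) * (θ y i * b y i)
            + ((1 - t i) * (2 - t i) / 2) * b y i ^ 2)) - a y) x v
        = ∑ i, (t i * θ x i + (1 - t i) * b x i) *
            fderiv ℝ (fun y => (t i - 1) * θ y i + (2 - t i) * b y i) x v := by
  intro x v
  have hθ' : ∀ i, HasFDerivAt (fun y => θ y i) (fderiv ℝ (fun y => θ y i) x) x := fun i =>
    (differentiableAt_pi.1 (hθ.differentiable (by simp) x) i).hasFDerivAt
  have hb' : ∀ i, HasFDerivAt (fun y => b y i) (fderiv ℝ (fun y => b y i) x) x := fun i =>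
    (differentiableAt_pi.1 (hb.differentiable (by simp) x) i).hasFDerivAt
  have ha' : HasFDerivAt a (fderiv ℝ a x) x := (ha.differentiable (by simp) x).hasFDerivAt
  have h_lhs := (HasFDerivAt.fun_sum (u := Finset.univ) fun i _ =>
    ((((hθ' i).pow 2).const_mul (t i * (t i - 1) / 2)).fun_add
      (((hθ' i).fun_mul (hb' i)).const_mul (t i * (2 - t i)))).fun_add
        (((hb' i).pow 2).const_mul ((1 - t i) * (2 - t i) / 2))).fun_sub ha'
  have h_rhs := fun i =>
    (((hθ' i).const_mul (t i - 1)).fun_add ((hb' i).const_mul (2 - t i))).fderiv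
  rw [h_lhs.fderiv]
  simp only [h_rhs, sub_apply, sum_apply,
    add_apply, smul_apply, smul_eq_mul, hcr]
  rw [← Finset.sum_sub_distrib]
  refine Finset.sum_congr rfl fun i _ => ?_
  simp only [nsmul_eq_mul]
  push_cast
  ring
end
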